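/- arXiv:1711.07737 — 6 statements merged into one kernel-verified Lean document; each statement's English description precedes it below -/
import Mathlib

section
/- Let X1,...,Xk be irreducible, complete, finite-rank median spaces and let X = X1 × ... × Xk be their ℓ1-product. Then every closed convex subset C ⊆ X is of the form C1 × ... × Ck, where each Ci is a closed convex subset of Xi; in fact Ci is the image of C under the projection p_i. -/
open Metric Filter Set

universe u

/-- The metric interval between `a` and `b`: points lying between `a` and `b`. -/
def mInterval {X : Type u} [MetricSpace X] (a b : X) : Set X :=
  {c : X | dist a c + dist c b = dist a b}

/-- A subset of a metric space is convex if it contains the interval between any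
two of its points. -/
def MConvex {X : Type u} [MetricSpace X] (C : Set X) : Prop :=
  ∀ a ∈ C, ∀ b ∈ C, mInterval a b ⊆ C

/-- `w` is the median of `x, y, z`. -/
def IsMedianPoint {X : Type u} [MetricSpace X] (x y z w : X) : Prop :=
  w ∈ mInterval x y ∧ w ∈ mInterval y z ∧ w ∈ mInterval x z

/-- A median space: every triple of points has a unique median. -/
def IsMedianSpace (X : Type u) [MetricSpace X] : Prop :=
  ∀ x y z : X, ∃! w : X, IsMedianPoint x y z w

/-- A halfspace: a subset such that both it and its complement are convex. -/
def IsHalfspace {X : Type u} [MetricSpace X] (h : Set X) : Prop :=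
  MConvex h ∧ MConvex hᶜ

/-- Two halfspaces are transverse. -/
def Transv {X : Type u} [MetricSpace X] (h k : Set X) : Prop :=
  (h ∩ k).Nonempty ∧ (h ∩ kᶜ).Nonempty ∧ (hᶜ ∩ k).Nonempty ∧ (hᶜ ∩ kᶜ).Nonempty

/-- A wall: an unordered pair `{h, hᶜ}` with `h` a halfspace. -/
def IsWall {X : Type u} [MetricSpace X] (w : Set (Set X)) : Prop :=
  ∃ h : Set X, IsHalfspace h ∧ w = {h, hᶜ}

/-- Two walls are transverse if a side of the first is transverse to a side of the second. -/
def WallTransv {X : Type u} [MetricSpace X] (w₁ w₂ : Set (Set X)) : Prop :=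
  ∃ h ∈ w₁, ∃ k ∈ w₂, Transv h k

/-- `X` has rank at most `r`: every set of pairwise transverse walls has cardinality `≤ r`. -/
def RankLE (X : Type u) [MetricSpace X] (r : ℕ) : Prop :=
  ∀ W : Finset (Set (Set X)), (∀ w ∈ W, IsWall w) →
    (W : Set (Set (Set X))).Pairwise WallTransv → W.card ≤ r

/-- `X` has finite rank. -/
def HasFiniteRank (X : Type u) [MetricSpace X] : Prop :=
  ∃ r : ℕ, RankLE X r

/-- The ℓ¹-product of a finite family of metric spaces (as a type synonym for the
dependent product, equipped with the ℓ¹ distance `d(x,y) = Σᵢ d(xᵢ,yᵢ)`). -/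
def L1Pi {ι : Type*} (X : ι → Type u) : Type _ := ∀ i, X i

noncomputable instance L1Pi.metricSpace {ι : Type*} [Fintype ι] (X : ι → Type u)
    [∀ i, MetricSpace (X i)] : MetricSpace (L1Pi X) where
  dist x y := ∑ i, dist (x i) (y i)
  dist_self x := by simp
  dist_comm x y := by simp [dist_comm]
  dist_triangle x y z := by
    calc ∑ i, dist (x i) (z i) ≤ ∑ i, (dist (x i) (y i) + dist (y i) (z i)) :=
          Finset.sum_le_sum fun i _ => dist_triangle _ _ _
      _ = _ := Finset.sum_add_distrib
  eq_of_dist_eq_zero := by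
    intro x y h
    funext i
    have h0 : ∀ j ∈ Finset.univ, dist (x j) (y j) = 0 :=
      (Finset.sum_eq_zero_iff_of_nonneg fun j _ => dist_nonneg).1 h
    exact dist_eq_zero.1 (h0 i (Finset.mem_univ i))

@[simp] lemma L1Pi.dist_eq {ι : Type*} [Fintype ι] (X : ι → Type u)
    [∀ i, MetricSpace (X i)] (x y : L1Pi X) :
    dist x y = ∑ i, dist (x i) (y i) := rfl

/-- A median space is irreducible if it is not isometric to an ℓ¹-product of two
median spaces, each containing at least two points. -/
def IsIrreducibleMS (X : Type u) [MetricSpace X] : Prop :=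
  ¬ ∃ (Y₁ Y₂ : Type u) (m₁ : MetricSpace Y₁) (m₂ : MetricSpace Y₂),
      haveI := m₁
      haveI := m₂
      IsMedianSpace Y₁ ∧ IsMedianSpace Y₂ ∧ Nontrivial Y₁ ∧ Nontrivial Y₂ ∧
        ∃ e : X ≃ Y₁ × Y₂, ∀ a b : X,
          dist a b = dist (e a).1 (e b).1 + dist (e a).2 (e b).2

/-!
The interval between `a` and `b` in an ℓ¹-product is the product of the coordinate intervals, so it
contains every point obtained from `a` by replacing some of its coordinates by those of `b`. A
convex set `C` is therefore stable under exchanging coordinates among its points, and any point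
whose coordinates all occur in `C` is reached by finitely many exchanges. The same stability
identifies `pᵢ '' C` with the preimage of `C` under the isometric inclusion of the `i`-th factor as
the slice through any chosen point of `C`, and this preimage is closed.
-/

lemma left_mem_mInterval {X : Type u} [MetricSpace X] (a b : X) : a ∈ mInterval a b := by
  simp [mInterval]

lemma right_mem_mInterval {X : Type u} [MetricSpace X] (a b : X) : b ∈ mInterval a b := by
  simp [mInterval]

namespace L1Pi

variable {ι : Type*} {X : ι → Type u}

section Update

variable [DecidableEq ι]

/-- The point of the ℓ¹-product obtained from `c` by replacing its `i`-th coordinate by `x`. This is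
`Function.update`, restated so that the result is typed as a point of `L1Pi X`; for fixed `c` and
`i` it parametrises the slice through `c` in the `i`-th direction. -/
def update (c : L1Pi X) (i : ι) (x : X i) : L1Pi X :=
  Function.update (β := X) c i x

lemma update_self (c : L1Pi X) (i : ι) (x : X i) : update c i x i = x :=
  Function.update_self (β := X) i x c

lemma update_of_ne {i j : ι} (h : j ≠ i) (c : L1Pi X) (x : X i) : update c i x j = c j :=
  Function.update_of_ne (β := X) h x c

end Update

variable [Fintype ι] [∀ i, MetricSpace (X i)]

lemma mem_mInterval_iff {a b z : L1Pi X} :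
    z ∈ mInterval a b ↔ ∀ i, z i ∈ mInterval (a i) (b i) := by
  simp only [mInterval, mem_ofPred_eq, dist_eq, ← Finset.sum_add_distrib]
  rw [eq_comm, Finset.sum_eq_sum_iff_of_le fun i _ => dist_triangle (a i) (z i) (b i)]
  simp only [Finset.mem_univ, true_imp_iff, eq_comm]

lemma update_mem_mInterval [DecidableEq ι] {a b : L1Pi X} {i : ι} {x : X i}
    (hx : x ∈ mInterval (a i) (b i)) : update a i x ∈ mInterval a b := by
  refine mem_mInterval_iff.2 fun j => ?_
  obtain rfl | hj := eq_or_ne j i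
  · rwa [update_self]
  · rw [update_of_ne hj]
    exact left_mem_mInterval _ _

lemma isometry_update [DecidableEq ι] (c : L1Pi X) (i : ι) : Isometry (update c i) := by
  refine Isometry.of_dist_eq fun x y => ?_
  rw [dist_eq, Fintype.sum_eq_single i fun j hj => ?_, update_self, update_self]
  rw [update_of_ne hj, update_of_ne hj, dist_self]

end L1Pi

namespace MConvex

open L1Pi

variable {ι : Type*} [Fintype ι] {X : ι → Type u} [∀ i, MetricSpace (X i)] {C : Set (L1Pi X)}

lemma update_mem [DecidableEq ι] (hC : MConvex C) {a b : L1Pi X} (ha : a ∈ C) (hb : b ∈ C)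
    (i : ι) : update a i (b i) ∈ C :=
  hC a ha b hb (update_mem_mInterval (right_mem_mInterval _ _))

lemma image_eval (hC : MConvex C) (i : ι) : MConvex ((fun z : L1Pi X => z i) '' C) := by
  classical
  rintro _ ⟨a, ha, rfl⟩ _ ⟨b, hb, rfl⟩ x hx
  exact ⟨update a i x, hC a ha b hb (update_mem_mInterval hx), update_self a i x⟩

lemma image_eval_eq_preimage_update [DecidableEq ι] (hC : MConvex C) {c : L1Pi X} (hc : c ∈ C)
    (i : ι) : (fun z : L1Pi X => z i) '' C = update c i ⁻¹' C := by
  ext x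
  constructor
  · rintro ⟨w, hw, rfl⟩
    exact hC.update_mem hc hw i
  · exact fun hx => ⟨update c i x, hx, update_self c i x⟩

lemma isClosed_image_eval (hC : MConvex C) (hC_closed : IsClosed C) (i : ι) :
    IsClosed ((fun z : L1Pi X => z i) '' C) := by
  classical
  obtain rfl | ⟨c, hc⟩ := C.eq_empty_or_nonempty
  · simp only [image_empty, isClosed_empty]
  · rw [hC.image_eval_eq_preimage_update hc i]
    exact hC_closed.preimage (isometry_update c i).continuous

lemma exists_mem_forall_mem_finset_eq (hC : MConvex C) (hne : C.Nonempty) {z : L1Pi X}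
    (s : Finset ι) (hz : ∀ i ∈ s, z i ∈ (fun w : L1Pi X => w i) '' C) :
    ∃ y ∈ C, ∀ i ∈ s, y i = z i := by
  classical
  induction s using Finset.induction_on with
  | empty =>
    obtain ⟨c, hc⟩ := hne
    exact ⟨c, hc, by simp⟩
  | insert i s _ ih =>
    rw [Finset.forall_mem_insert] at hz
    obtain ⟨⟨w, hw, hwz⟩, hzs⟩ := hz
    obtain ⟨y, hy, hys⟩ := ih hzs
    refine ⟨update y i (w i), hC.update_mem hy hw i, fun j hj => ?_⟩
    obtain rfl | hji := eq_or_ne j i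
    · rwa [update_self]
    · rw [update_of_ne hji]
      exact hys j (Finset.mem_of_mem_insert_of_ne hj hji)

lemma eq_setOf_forall_mem_image_eval [Nonempty ι] (hC : MConvex C) :
    C = {z : L1Pi X | ∀ i, z i ∈ (fun w : L1Pi X => w i) '' C} := by
  refine Subset.antisymm (fun z hz i => mem_image_of_mem _ hz) fun z hz => ?_
  have hne : C.Nonempty := Nonempty.of_image ⟨_, hz (Classical.arbitrary ι)⟩
  obtain ⟨y, hy, hyz⟩ := hC.exists_mem_forall_mem_finset_eq hne Finset.univ fun i _ => hz i
  obtain rfl : y = z := funext fun i => hyz i (Finset.mem_univ i)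
  exact hy

end MConvex

theorem closed_convex_subset_of_l1_product_is_product_general
    {ι : Type*} [Fintype ι] [Nonempty ι] (X : ι → Type u) [∀ i, MetricSpace (X i)]
    (C : Set (L1Pi X)) (hCcl : IsClosed C) (hCconv : MConvex C) :
    (∀ i, IsClosed ((fun z : L1Pi X => z i) '' C) ∧
      MConvex ((fun z : L1Pi X => z i) '' C)) ∧
    C = {z : L1Pi X | ∀ i, z i ∈ (fun w : L1Pi X => w i) '' C} :=
  ⟨fun i => ⟨hCconv.isClosed_image_eval hCcl i, hCconv.image_eval i⟩,
    hCconv.eq_setOf_forall_mem_image_eval⟩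

/-- Let `X₁, …, X_k` be irreducible, complete, finite-rank median
spaces and let `X` be their ℓ¹-product. Then every closed convex subset `C ⊆ X` is
the product `C₁ × … × C_k`, where each `Cᵢ = pᵢ '' C` is a closed convex subset
of `Xᵢ`. -/
theorem closed_convex_subset_of_l1_product_is_product
    {k : ℕ} (hk : 0 < k) (X : Fin k → Type u) [∀ i, MetricSpace (X i)]
    [∀ i, CompleteSpace (X i)]
    (hmed : ∀ i, IsMedianSpace (X i))
    (hfr : ∀ i, HasFiniteRank (X i))
    (hirr : ∀ i, IsIrreducibleMS (X i))
    (C : Set (L1Pi X)) (hCcl : IsClosed C) (hCconv : MConvex C) :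
    (∀ i, IsClosed ((fun z : L1Pi X => z i) '' C) ∧
      MConvex ((fun z : L1Pi X => z i) '' C)) ∧
    C = {z : L1Pi X | ∀ i, z i ∈ (fun w : L1Pi X => w i) '' C} := by
  have : NeZero k := ⟨hk.ne'⟩
  exact closed_convex_subset_of_l1_product_is_product_general X C hCcl hCconv
end

section
/- Let X1,...,Xk be metric spaces and X their ℓ1-product with projections p_i. Fix points x_i, y_i ∈ X_i and ε > 0 with 2ε < d(x_i,y_i) for all i. Let x ∈ X be the point with coordinates (x_1,...,x_k), and for each i let z_i ∈ X be the point that agrees with x except that its i-th coordinate is y_i. If F is a surjective isometry of X satisfying d(F(x),x) < ε and d(F(z_i),z_i) < ε for all i, then there is no pair of indices i ≠ j admitting an isometry f : X_i → X_j with p_j ∘ F = f ∘ p_i. -/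
open Metric Filter Set

universe u

namespace L1Pi

variable {ι : Type*} [Fintype ι] {X : ι → Type u} [∀ i, MetricSpace (X i)]

lemma dist_apply_le_dist (a b : L1Pi X) (i : ι) : dist (a i) (b i) ≤ dist a b :=
  Finset.single_le_sum (f := fun l => dist (a l) (b l)) (fun _ _ => dist_nonneg)
    (Finset.mem_univ i)

lemma dist_apply_le_dist_add_dist_of_apply_eq {a b a' b' : L1Pi X} {i : ι}
    (h : a' i = b' i) : dist (a i) (b i) ≤ dist a' a + dist b' b :=
  calc dist (a i) (b i) ≤ dist (a' i) (a i) + dist (a' i) (b i) := dist_triangle_left _ _ _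
    _ = dist (a' i) (a i) + dist (b' i) (b i) := by rw [h]
    _ ≤ dist a' a + dist b' b := add_le_add (dist_apply_le_dist _ _ i) (dist_apply_le_dist _ _ i)

end L1Pi

theorem no_factor_swapping_isometry_close_to_id_general
    {ι : Type*} [Fintype ι] [DecidableEq ι] {X : ι → Type u} [∀ i, MetricSpace (X i)]
    {x : L1Pi X} {j : ι} {t : X j} {ε : ℝ} (hsep : 2 * ε ≤ dist (x j) t)
    (F : L1Pi X → L1Pi X) (hFx : dist (F x) x < ε)
    (hFz : dist (F (Function.update x j t)) (Function.update x j t) < ε) :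
    ¬ DependsOn (fun z : ∀ i, X i => F z j) {j}ᶜ := by
  intro hF
  have apply_eq : F x j = F (Function.update x j t) j :=
    hF fun i hi => (Function.update_of_ne hi t x).symm
  have dist_lt : dist (x j) t < ε + ε :=
    calc dist (x j) t = dist (x j) (Function.update x j t j) :=
          congrArg (dist (x j)) (Function.update_self j t x).symm
      _ ≤ dist (F x) x + dist (F (Function.update x j t)) (Function.update x j t) :=
          L1Pi.dist_apply_le_dist_add_dist_of_apply_eq apply_eq
      _ < ε + ε := add_lt_add hFx hFz
  linarith

/-- In an ℓ¹-product `X = X₁ × … × X_k`, fix points `xᵢ, yᵢ ∈ Xᵢ`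
and `ε > 0` with `2ε < d(xᵢ,yᵢ)` for all `i`.  Let `x` have coordinates `(xᵢ)` and
let `zᵢ` agree with `x` except that its `i`-th coordinate is `yᵢ`.  If `F` is a
surjective isometry of `X` with `d(F x, x) < ε` and `d(F zᵢ, zᵢ) < ε` for all `i`,
then no pair of distinct indices `i ≠ j` admits an isometry `f : Xᵢ → X_j` with
`p_j ∘ F = f ∘ pᵢ`. -/
theorem no_factor_swapping_isometry_close_to_id
    {k : ℕ} (X : Fin k → Type u) [∀ i, MetricSpace (X i)]
    (x y : L1Pi X) (ε : ℝ) (hε : 0 < ε)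
    (hsep : ∀ i, 2 * ε < dist (x i) (y i))
    (F : L1Pi X ≃ᵢ L1Pi X)
    (hFx : dist (F x) x < ε)
    (hFz : ∀ i, dist (F (Function.update x i (y i))) (Function.update x i (y i)) < ε) :
    ¬ ∃ (i j : Fin k), i ≠ j ∧ ∃ f : X i → X j, Isometry f ∧
      ∀ z : L1Pi X, (F z) j = f (z i) := by
  rintro ⟨i, j, hij, f, -, hf⟩
  exact no_factor_swapping_isometry_close_to_id_general (hsep j).le F hFx (hFz j)
    fun a b hab => (hf a).trans <| (congrArg f (hab i hij)).trans (hf b).symm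
end

section
/- Let X be a median space, C1, C2 gate-convex subsets with gate-projections π1, π2, S1 := π1(C2), and B := ⋃_{x1 ∈ S1} I(x1, π2(x1)) the bridge. Then for any pair of gates (x1,x2) for (C1,C2), the map sending b ∈ B to (π_{S1}(b), m(b,x1,x2)) is a bijective isometry from B onto the ℓ1-product S1 × I(x1,x2) (here S1 is gate-convex with gate-projection π_{S1}, and m(·,x1,x2) is the gate-projection to the interval I(x1,x2)). -/
open Metric Filter Set

universe u

/-- `y` is a gate for `(x, C)`: `y ∈ C` and `y` lies between `x` and every point of `C`. -/
def IsGate {X : Type u} [MetricSpace X] (x : X) (C : Set X) (y : X) : Prop :=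
  y ∈ C ∧ ∀ z ∈ C, y ∈ mInterval x z

/-- `C` is gate-convex: every point of `X` has a gate in `C`. -/
def GateConvex {X : Type u} [MetricSpace X] (C : Set X) : Prop :=
  ∀ x : X, ∃ y, IsGate x C y

/-- `(x₁, x₂)` is a pair of gates for `(C₁, C₂)`. -/
def IsGatePair {X : Type u} [MetricSpace X] (C₁ C₂ : Set X) (x₁ x₂ : X) : Prop :=
  IsGate x₂ C₁ x₁ ∧ IsGate x₁ C₂ x₂

/-!
Two gate pairs `(a, a')` and `(d, d')` span a metric rectangle: each corner lies between its two
neighbours. A point of the side `I(a, a')` has a median with the opposite side, this median cuts the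
rectangle into two smaller ones, and taking it is an isometry `I(a, a') → I(d, d')` whose inverse is
the median in the other direction. So the bridge is a union of parallel intervals, and a distance
between points of two of them splits as a distance in the shore plus one along a single interval.
To read the second term in the fixed interval `I(x₁, x₂)`, transport must be independent of the
path. Along a geodesic of the shore this is a count of side lengths; in general one factors through
the median of the three feet, which lies in the shore because the shore is convex.
-/

section Betweenness

variable {X : Type u} [MetricSpace X] {w x y z : X}

theorem mem_mInterval_comm : y ∈ mInterval x z ↔ y ∈ mInterval z x := by
  change dist x y + dist y z = dist x z ↔ dist z y + dist y x = dist z x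
  rw [dist_comm x y, dist_comm y z, dist_comm x z, add_comm]

theorem mem_mInterval_trans_left (hy : y ∈ mInterval w z) (hx : x ∈ mInterval w y) :
    x ∈ mInterval w z := by
  change _ + _ = _ at hy hx ⊢
  linarith [dist_triangle w x z, dist_triangle x y z]

theorem mem_mInterval_trans_left_right (hy : y ∈ mInterval w z) (hx : x ∈ mInterval w y) :
    y ∈ mInterval x z := by
  change _ + _ = _ at hy hx ⊢
  linarith [dist_triangle w x z, dist_triangle x y z]

theorem mem_mInterval_trans_right (hx : x ∈ mInterval w z) (hy : y ∈ mInterval x z) :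
    y ∈ mInterval w z :=
  mem_mInterval_comm.1
    (mem_mInterval_trans_left (mem_mInterval_comm.1 hx) (mem_mInterval_comm.1 hy))

theorem mem_mInterval_trans_right_left (hx : x ∈ mInterval w z) (hy : y ∈ mInterval x z) :
    x ∈ mInterval w y :=
  mem_mInterval_comm.1
    (mem_mInterval_trans_left_right (mem_mInterval_comm.1 hx) (mem_mInterval_comm.1 hy))

theorem eq_of_mem_mInterval_of_mem_mInterval (hy : y ∈ mInterval x z) (hx : x ∈ mInterval y z) :
    x = y := by
  change _ + _ = _ at hy hx
  exact dist_le_zero.1 (by linarith [dist_comm x y])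

end Betweenness

section Gate

variable {X : Type u} [MetricSpace X] {C D : Set X} {x y y' z : X}

theorem IsGate.unique (hy : IsGate x C y) (hy' : IsGate x C y') : y = y' :=
  eq_of_mem_mInterval_of_mem_mInterval
    (mem_mInterval_comm.1 (hy'.2 y hy.1)) (mem_mInterval_comm.1 (hy.2 y' hy'.1))

theorem IsGate.mono (hy : IsGate x D y) (hCD : C ⊆ D) (hyC : y ∈ C) : IsGate x C y :=
  ⟨hyC, fun z hz => hy.2 z (hCD hz)⟩

theorem IsGate.of_mem_mInterval (hy : IsGate x C y) (hz : z ∈ mInterval x y) : IsGate z C y :=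
  ⟨hy.1, fun c hc => mem_mInterval_trans_left_right (hy.2 c hc) hz⟩

theorem GateConvex.mConvex (hC : GateConvex C) : MConvex C := by
  intro a ha b hb c hc
  obtain ⟨g, hg⟩ := hC c
  have hgc : g = c := eq_of_mem_mInterval_of_mem_mInterval
    (mem_mInterval_trans_left_right hc (mem_mInterval_comm.1 (hg.2 a ha))) (hg.2 b hb)
  exact hgc ▸ hg.1

end Gate

section Median

variable {X : Type u} [MetricSpace X] {x y z w : X}

theorem IsMedianPoint.swap_right (hw : IsMedianPoint x y z w) : IsMedianPoint x z y w :=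
  ⟨hw.2.2, mem_mInterval_comm.1 hw.2.1, hw.1⟩

theorem IsMedianPoint.isGate (hX : IsMedianSpace X) (hw : IsMedianPoint x y z w) :
    IsGate x (mInterval y z) w := by
  refine ⟨hw.2.1, fun v hv => ?_⟩
  obtain ⟨u, hxv, hvw, hxw⟩ := (hX x v w).exists
  obtain ⟨p, hup, hvp, hyp⟩ := (hX u v y).exists
  obtain ⟨q, huq, hpq, hzq⟩ := (hX u p z).exists
  have p_mem : p ∈ mInterval y z := mem_mInterval_trans_left hv (mem_mInterval_comm.1 hvp)
  have q_median : IsMedianPoint u y z q :=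
    ⟨mem_mInterval_trans_left hyp huq, mem_mInterval_trans_right p_mem hpq, hzq⟩
  have w_median : IsMedianPoint u y z w :=
    ⟨mem_mInterval_trans_left_right hw.1 hxw, hw.2.1, mem_mInterval_trans_left_right hw.2.2 hxw⟩
  have hqw : q = w := (hX u y z).unique q_median w_median
  have w_mem : w ∈ mInterval u v := mem_mInterval_trans_left hup (hqw ▸ huq)
  have huw : u = w := eq_of_mem_mInterval_of_mem_mInterval w_mem (mem_mInterval_comm.1 hvw)
  exact huw ▸ hxv

end Median

/-- A (possibly degenerate) metric rectangle with corners `a, b, c, d` in cyclic order: each corner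
lies between its two neighbours. It records the relative position of two gate pairs `(a, b)` and
`(d, c)`. -/
structure IsRectangle {X : Type u} [MetricSpace X] (a b c d : X) : Prop where
  corner₁ : a ∈ mInterval d b
  corner₂ : b ∈ mInterval a c
  corner₃ : c ∈ mInterval b d
  corner₄ : d ∈ mInterval c a

namespace IsRectangle

variable {X : Type u} [MetricSpace X] {a b c d p q : X}

theorem rotate (h : IsRectangle a b c d) : IsRectangle b c d a :=
  ⟨h.corner₂, h.corner₃, h.corner₄, h.corner₁⟩

theorem reflect (h : IsRectangle a b c d) : IsRectangle b a d c :=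
  ⟨mem_mInterval_comm.1 h.corner₂, mem_mInterval_comm.1 h.corner₁,
    mem_mInterval_comm.1 h.corner₄, mem_mInterval_comm.1 h.corner₃⟩

theorem dist_opposite_eq (h : IsRectangle a b c d) : dist a b = dist d c := by
  obtain ⟨ha, hb, hc, hd⟩ := h
  change _ + _ = _ at ha hb hc hd
  linarith [dist_comm a c, dist_comm b d, dist_comm c d, dist_comm a d]

theorem subdivide (h : IsRectangle a b c d) (hp : p ∈ mInterval a b)
    (hq : IsMedianPoint p d c q) : IsRectangle a p q d where
  corner₁ := mem_mInterval_trans_right_left h.corner₁ hp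
  corner₂ := mem_mInterval_trans_right_left (mem_mInterval_trans_left h.corner₂ hp) hq.2.2
  corner₃ := hq.1
  corner₄ := mem_mInterval_trans_left_right h.corner₄ (mem_mInterval_comm.1 hq.2.1)

theorem subdivide_right (h : IsRectangle a b c d) (hp : p ∈ mInterval a b)
    (hq : IsMedianPoint p d c q) : IsRectangle b p q c :=
  h.reflect.subdivide (mem_mInterval_comm.1 hp) hq.swap_right

theorem isMedianPoint_symm (h : IsRectangle a b c d) (hp : p ∈ mInterval a b)
    (hq : IsMedianPoint p d c q) : IsMedianPoint q a b p :=
  ⟨mem_mInterval_comm.1 (h.subdivide hp hq).corner₂, hp,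
    mem_mInterval_comm.1 (h.subdivide_right hp hq).corner₂⟩

theorem dist_median (h : IsRectangle a b c d) (hp : p ∈ mInterval a b)
    (hq : IsMedianPoint p d c q) : dist p q = dist a d :=
  (h.subdivide hp hq).rotate.dist_opposite_eq

theorem dist_eq_add_dist_median (hX : IsMedianSpace X) (h : IsRectangle a b c d)
    (hp : p ∈ mInterval a b) (hq : IsMedianPoint p d c q) {z : X} (hz : z ∈ mInterval d c) :
    dist p z = dist a d + dist q z := by
  rw [← h.dist_median hp hq]
  exact ((hq.isGate hX).2 z hz).symm

theorem dist_median_median (hX : IsMedianSpace X) (h : IsRectangle a b c d) {p' q' : X}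
    (hp : p ∈ mInterval a b) (hp' : p' ∈ mInterval a b)
    (hq : IsMedianPoint p d c q) (hq' : IsMedianPoint p' d c q') :
    dist q q' = dist p p' := by
  have hpq' : dist p q' = dist a d + dist q q' := h.dist_eq_add_dist_median hX hp hq hq'.2.1
  have hq'p : dist q' p = dist d a + dist p' p :=
    h.reflect.rotate.rotate.dist_eq_add_dist_median hX hq'.2.1 (h.isMedianPoint_symm hp' hq') hp
  linarith [dist_comm p p', dist_comm p q', dist_comm a d]

section Adjacent

variable {e f r : X}

theorem mem_mInterval_of_adjacent (h₁ : IsRectangle a p q e) (h₂ : IsRectangle e q r d)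
    (ha : a ∈ mInterval p d) (he : e ∈ mInterval a d) : r ∈ mInterval p d := by
  change _ + _ = _ at ha he ⊢
  have hap : dist p a = dist r d := by
    rw [dist_comm p a, h₁.dist_opposite_eq, h₂.dist_opposite_eq, dist_comm]
  linarith [dist_triangle p r d, dist_triangle p q r,
    h₁.rotate.dist_opposite_eq, h₂.rotate.dist_opposite_eq]

theorem isMedianPoint_trans_of_mem (h₁ : IsRectangle a b f e) (h₂ : IsRectangle e f c d)
    (h : IsRectangle a b c d) (he : e ∈ mInterval a d) (hp : p ∈ mInterval a b)
    (hq : IsMedianPoint p e f q) (hr : IsMedianPoint q d c r) : IsMedianPoint p d c r := by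
  have hf : f ∈ mInterval b c := by
    change _ + _ = _ at he ⊢
    rw [h₁.rotate.dist_opposite_eq, h₂.rotate.dist_opposite_eq, h.rotate.dist_opposite_eq, he]
  have hap : a ∈ mInterval p d :=
    mem_mInterval_comm.1 (mem_mInterval_trans_right_left h.corner₁ hp)
  have hbp : b ∈ mInterval p c :=
    mem_mInterval_trans_left_right h.corner₂ hp
  exact ⟨mem_mInterval_of_adjacent (h₁.subdivide hp hq) (h₂.subdivide hq.2.1 hr) hap he, hr.2.1,
    mem_mInterval_of_adjacent (h₁.subdivide_right hp hq) (h₂.subdivide_right hq.2.1 hr) hbp hf⟩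

end Adjacent

end IsRectangle

section GatePair

variable {X : Type u} [MetricSpace X] {C₁ C₂ : Set X}

theorem IsGate.isGatePair {a b c : X} (ha : IsGate c C₁ a) (hc : c ∈ C₂) (hb : IsGate a C₂ b) :
    IsGatePair C₁ C₂ a b :=
  ⟨ha.of_mem_mInterval (mem_mInterval_comm.1 (hb.2 c hc)), hb⟩

theorem IsGatePair.isRectangle {a b c d : X} (hab : IsGatePair C₁ C₂ a b)
    (hdc : IsGatePair C₁ C₂ d c) : IsRectangle a b c d where
  corner₁ := mem_mInterval_comm.1 (hab.1.2 d hdc.1.1)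
  corner₂ := hab.2.2 c hdc.2.1
  corner₃ := mem_mInterval_comm.1 (hdc.2.2 b hab.2.1)
  corner₄ := hdc.1.2 a hab.1.1

/-- The shore of `C₁` facing `C₂`: the points of `C₁` that belong to a pair of gates. It equals
`π₁ '' C₂` when gate-projections exist, but does not depend on a choice of them. -/
def shore (C₁ C₂ : Set X) : Set X :=
  {a | ∃ a', IsGatePair C₁ C₂ a a'}

/-- The bridge between `C₁` and `C₂`: the union of the intervals spanned by the pairs of gates. -/
def bridge (C₁ C₂ : Set X) : Set X :=
  {p | ∃ a a', IsGatePair C₁ C₂ a a' ∧ p ∈ mInterval a a'}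

theorem image_eq_shore {π₁ π₂ : X → X} (hπ₁ : ∀ x, IsGate x C₁ (π₁ x))
    (hπ₂ : ∀ x, IsGate x C₂ (π₂ x)) : π₁ '' C₂ = shore C₁ C₂ := by
  ext a
  constructor
  · rintro ⟨c, hc, rfl⟩
    exact ⟨π₂ (π₁ c), (hπ₁ c).isGatePair hc (hπ₂ (π₁ c))⟩
  · rintro ⟨a', ha⟩
    exact ⟨a', ha.2.1, (hπ₁ a').unique ha.1⟩

theorem iUnion_mInterval_eq_bridge {π₂ : X → X} (hπ₂ : ∀ x, IsGate x C₂ (π₂ x)) :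
    ⋃ a ∈ shore C₁ C₂, mInterval a (π₂ a) = bridge C₁ C₂ := by
  have gate_eq {a a' : X} (ha : IsGatePair C₁ C₂ a a') : π₂ a = a' := (hπ₂ a).unique ha.2
  ext p
  simp only [mem_iUnion, exists_prop]
  constructor
  · rintro ⟨a, ⟨a', ha⟩, hp⟩
    exact ⟨a, a', ha, gate_eq ha ▸ hp⟩
  · rintro ⟨a, a', ha, hp⟩
    exact ⟨a, ⟨a', ha⟩, (gate_eq ha).symm ▸ hp⟩

theorem IsGatePair.isGate_shore {a a' p : X} (ha : IsGatePair C₁ C₂ a a')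
    (hp : p ∈ mInterval a a') : IsGate p (shore C₁ C₂) a :=
  (ha.1.of_mem_mInterval (mem_mInterval_comm.1 hp)).mono (fun _ ⟨_, he⟩ => he.1.1) ⟨a', ha⟩

section Transport

variable {a a' d d' e e' p q r : X}

theorem IsGatePair.isMedianPoint_trans (hX : IsMedianSpace X) (hS : MConvex (shore C₁ C₂))
    (ha : IsGatePair C₁ C₂ a a') (he : IsGatePair C₁ C₂ e e') (hd : IsGatePair C₁ C₂ d d')
    (hp : p ∈ mInterval a a') (hq : IsMedianPoint p e e' q) (hr : IsMedianPoint q d d' r) :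
    IsMedianPoint p d d' r := by
  obtain ⟨m, hae, hed, had⟩ := (hX a e d).exists
  obtain ⟨m', hm⟩ : m ∈ shore C₁ C₂ := hS a ⟨a', ha⟩ e ⟨e', he⟩ hae
  have trans_through_m {b b' c c' s t u : X} (hb : IsGatePair C₁ C₂ b b')
      (hc : IsGatePair C₁ C₂ c c') (hbc : m ∈ mInterval b c) (hs : s ∈ mInterval b b')
      (ht : IsMedianPoint s m m' t) (hu : IsMedianPoint t c c' u) : IsMedianPoint s c c' u :=
    (hb.isRectangle hm).isMedianPoint_trans_of_mem (hm.isRectangle hc) (hb.isRectangle hc)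
      hbc hs ht hu
  obtain ⟨n, hn⟩ := (hX p m m').exists
  obtain ⟨q', hq'⟩ := (hX n e e').exists
  obtain ⟨r', hr'⟩ := (hX n d d').exists
  have hqq' : q' = q := (hX p e e').unique (trans_through_m ha he hae hp hn hq') hq
  have hqn : IsMedianPoint q m m' n :=
    (hm.isRectangle he).isMedianPoint_symm hn.2.1 (hqq' ▸ hq')
  have hrr' : r' = r := (hX q d d').unique (trans_through_m he hd hed hq.2.1 hqn hr') hr
  exact hrr' ▸ trans_through_m ha hd had hp hn hr'

theorem IsGatePair.dist_eq_dist_add_dist_median (hX : IsMedianSpace X)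
    (hS : MConvex (shore C₁ C₂)) (ha : IsGatePair C₁ C₂ a a') (he : IsGatePair C₁ C₂ e e')
    (hd : IsGatePair C₁ C₂ d d') (hp : p ∈ mInterval a a') (hq : q ∈ mInterval e e')
    {s t : X} (hs : IsMedianPoint p d d' s) (ht : IsMedianPoint q d d' t) :
    dist p q = dist a e + dist s t := by
  obtain ⟨r, hr⟩ := (hX p e e').exists
  obtain ⟨s', hs'⟩ := (hX r d d').exists
  have hss' : s' = s :=
    (hX p d d').unique (ha.isMedianPoint_trans hX hS he hd hp hr hs') hs
  calc dist p q = dist a e + dist r q :=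
        (ha.isRectangle he).dist_eq_add_dist_median hX hp hr hq
    _ = dist a e + dist s t := by
        rw [(he.isRectangle hd).dist_median_median hX hr.2.1 hq (hss' ▸ hs') ht]

end Transport

end GatePair

/-- Let `C₁, C₂` be gate-convex subsets of a median space with
gate-projections `π₁, π₂`, `S₁ = π₁ '' C₂`, and let
`B = ⋃_{x₁ ∈ S₁} I(x₁, π₂ x₁)` be the bridge.  For any pair of gates `(x₁,x₂)`,
the map `b ↦ (π_{S₁} b, m(b,x₁,x₂))` is a bijective isometry from `B` onto the
ℓ¹-product `S₁ × I(x₁,x₂)`; here `π_{S₁}` is the gate-projection to `S₁` and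
`m(·,x₁,x₂)` is the gate-projection to the interval `I(x₁,x₂)`. -/
theorem bridge_is_l1_product_of_shore_and_interval
    {X : Type u} [MetricSpace X] (hX : IsMedianSpace X)
    (C₁ C₂ : Set X) (π₁ π₂ : X → X)
    (hπ₁ : ∀ x : X, IsGate x C₁ (π₁ x)) (hπ₂ : ∀ x : X, IsGate x C₂ (π₂ x))
    (B : Set X) (hB : B = ⋃ a ∈ π₁ '' C₂, mInterval a (π₂ a))
    (x₁ x₂ : X) (hpair : IsGatePair C₁ C₂ x₁ x₂)
    (πS : X → X) (hπS : ∀ x : X, IsGate x (π₁ '' C₂) (πS x))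
    (med : X → X) (hmed : ∀ b : X, IsMedianPoint b x₁ x₂ (med b)) :
    (∀ b ∈ B, πS b ∈ π₁ '' C₂ ∧ med b ∈ mInterval x₁ x₂) ∧
    (∀ b ∈ B, ∀ b' ∈ B, πS b = πS b' → med b = med b' → b = b') ∧
    (∀ s ∈ π₁ '' C₂, ∀ t ∈ mInterval x₁ x₂, ∃ b ∈ B, πS b = s ∧ med b = t) ∧
    (∀ b ∈ B, ∀ b' ∈ B,
      dist b b' = dist (πS b) (πS b') + dist (med b) (med b')) := by
  rw [image_eq_shore hπ₁ hπ₂] at hB hπS ⊢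
  obtain rfl : B = bridge C₁ C₂ := hB.trans (iUnion_mInterval_eq_bridge hπ₂)
  have hS : MConvex (shore C₁ C₂) := GateConvex.mConvex fun x => ⟨πS x, hπS x⟩
  have foot {a a' p : X} (ha : IsGatePair C₁ C₂ a a') (hp : p ∈ mInterval a a') : πS p = a :=
    (hπS p).unique (ha.isGate_shore hp)
  have isometry : ∀ b ∈ bridge C₁ C₂, ∀ b' ∈ bridge C₁ C₂,
      dist b b' = dist (πS b) (πS b') + dist (med b) (med b') := by
    rintro b ⟨a, a', ha, hb⟩ b' ⟨e, e', he, hb'⟩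
    rw [foot ha hb, foot he hb']
    exact ha.dist_eq_dist_add_dist_median hX hS he hpair hb hb' (hmed b) (hmed b')
  refine ⟨fun b _ => ⟨(hπS b).1, (hmed b).2.1⟩, fun b hb b' hb' hπ hm => ?_, ?_, isometry⟩
  · rw [← dist_eq_zero, isometry b hb b' hb', hπ, hm, dist_self, dist_self, add_zero]
  · rintro s ⟨s', hs⟩ t ht
    obtain ⟨b, hb⟩ := (hX t s s').exists
    have hbt : IsMedianPoint b x₁ x₂ t := (hpair.isRectangle hs).isMedianPoint_symm ht hb
    exact ⟨b, ⟨s, s', hs, hb.2.1⟩, foot hs hb.2.1, (hX b x₁ x₂).unique (hmed b) hbt⟩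
end

section
/- Let X be a median space of rank at most r and let σ1, σ2 be ultrafilters on the set 𝓗(X) of halfspaces. (1) If σ1 \ σ2 is nonempty, it can be decomposed as a disjoint union C1 ⊔ ... ⊔ Ck with k ≤ r, where each C_i is nonempty and totally ordered by inclusion. (2) Every infinite subset of σ1 \ σ2 contains an infinite subset that is totally ordered by inclusion. -/
open Metric Filter Set

universe u

/-- An ultrafilter on the set of halfspaces of `X`: a set of halfspaces, any two
of which intersect, containing exactly one of `h, hᶜ` for every halfspace `h`. -/
def UltrafilterOn (X : Type u) [MetricSpace X] (σ : Set (Set X)) : Prop :=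
  (∀ h ∈ σ, IsHalfspace h) ∧
  (∀ h ∈ σ, ∀ k ∈ σ, (h ∩ k).Nonempty) ∧
  ∀ h : Set X, IsHalfspace h → ((h ∈ σ ∧ hᶜ ∉ σ) ∨ (hᶜ ∈ σ ∧ h ∉ σ))

/-- The principal ultrafilter of halfspaces containing the point `x`. -/
def sigmaPt {X : Type u} [MetricSpace X] (x : X) : Set (Set X) :=
  {h : Set X | IsHalfspace h ∧ x ∈ h}

/-!
If `h` and `k` lie in `σ₁ \ σ₂`, then `h ∩ k` is nonempty because both belong to `σ₁`, and
`hᶜ ∩ kᶜ` is nonempty because both complements belong to `σ₂`. So two such halfspaces that are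
incomparable under inclusion are transverse, and the rank bounds the size of antichains in
`σ₁ \ σ₂`. Dilworth's theorem then covers `σ₁ \ σ₂` by `r` chains. For finite sets we follow
Galvin's proof: remove a maximal element `a` and cover the rest by chains. Unless the removal has
already lowered the width, let `x i` be the greatest element of the `i`-th chain lying on an
antichain of the largest possible size. The `x i` form an antichain, so some `x i` lies below `a`,
and deleting `a` together with the part of the `i`-th chain below `x i` lowers the width. Rado's
selection principle passes to infinite sets.
-/

section Dilworth

variable {α : Type*}

theorem exists_injective_transversal_of_isAntichain {R : α → α → Prop} {ι : Type*} [Finite ι]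
    {C : ι → Set α} (hC : ∀ i, IsChain R (C i)) {t : Finset α} (ht : IsAntichain R (t : Set α))
    (htC : (t : Set α) ⊆ ⋃ i, C i) (hcard : Nat.card ι ≤ t.card) :
    ∃ g : ι → α, Function.Injective g ∧ ∀ i, g i ∈ t ∧ g i ∈ C i := by
  choose color hcolor using fun x : t => mem_iUnion.mp (htC x.2)
  have color_injective : Function.Injective color := fun x y hxy =>
    Subtype.ext <| inter_subsingleton_of_isAntichain_of_isChain ht (hC (color x))
      ⟨x.2, hcolor x⟩ ⟨y.2, hxy ▸ hcolor y⟩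
  let e : t ≃ ι := Equiv.ofBijective color <|
    color_injective.bijective_of_nat_card_le (by simpa using hcard)
  have color_symm (i : ι) : color (e.symm i) = i := e.apply_symm_apply i
  have symm_mem (i : ι) : (e.symm i : α) ∈ C i := by
    simpa only [color_symm] using hcolor (e.symm i)
  exact ⟨fun i => e.symm i, Subtype.val_injective.comp e.symm.injective,
    fun i => ⟨(e.symm i).2, symm_mem i⟩⟩

variable [Preorder α]

theorem exists_isGreatest_of_finite_of_isChain {s : Set α} (hs : s.Finite) (hne : s.Nonempty)
    (hchain : IsChain (· ≤ ·) s) : ∃ x, IsGreatest s x := by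
  obtain ⟨x, hx⟩ := hs.exists_maximal hne
  exact ⟨x, hx.prop, fun y hy => (hchain.total hy hx.prop).elim id (hx.le_of_ge hy)⟩

/-- The order-theoretic width of `s` is at most `n`: no finite antichain contained in `s` has more
than `n` elements. -/
def WidthLE (s : Set α) (n : ℕ) : Prop :=
  ∀ t : Finset α, (t : Set α) ⊆ s → IsAntichain (· ≤ ·) (t : Set α) → t.card ≤ n

/-- `s` is covered by `n` chains. The chains may be empty, may overlap, and need not be contained
in `s`. -/
def CoveredByChains (s : Set α) (n : ℕ) : Prop :=
  ∃ C : Fin n → Set α, (∀ i, IsChain (· ≤ ·) (C i)) ∧ s ⊆ ⋃ i, C i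

/-- The points of `s` lying on an antichain in `s` with at least `n` elements. In Galvin's proof of
Dilworth's theorem `n` is the width of `s`, so these are the points on antichains of maximum
size. -/
def largeAntichainPoints (s : Set α) (n : ℕ) : Set α :=
  {x | ∃ t : Finset α, (t : Set α) ⊆ s ∧ IsAntichain (· ≤ ·) (t : Set α) ∧ n ≤ t.card ∧ x ∈ t}

variable {s : Set α} {n : ℕ}

theorem WidthLE.mono {s' : Set α} (hs : WidthLE s n) (hss' : s' ⊆ s) : WidthLE s' n :=
  fun t ht => hs t (ht.trans hss')

theorem CoveredByChains.mono {s' : Set α} (hs : CoveredByChains s n) (hss' : s' ⊆ s) :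
    CoveredByChains s' n :=
  let ⟨C, hC, hsC⟩ := hs
  ⟨C, hC, hss'.trans hsC⟩

theorem CoveredByChains.succ_of_diff {K : Set α} (hK : IsChain (· ≤ ·) K)
    (hs : CoveredByChains (s \ K) n) : CoveredByChains s (n + 1) := by
  obtain ⟨C, hC, hsC⟩ := hs
  refine ⟨Fin.cons K C, Fin.cases hK hC, fun x hx => ?_⟩
  by_cases hxK : x ∈ K
  · exact mem_iUnion.mpr ⟨0, hxK⟩
  · obtain ⟨i, hi⟩ := mem_iUnion.mp (hsC ⟨hx, hxK⟩)
    exact mem_iUnion.mpr ⟨i.succ, hi⟩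

theorem exists_isGreatest_largeAntichainPoints_inter (hs : s.Finite)
    {C : Fin n → Set α} (hC : ∀ i, IsChain (· ≤ ·) (C i)) (hsC : s ⊆ ⋃ i, C i)
    {t : Finset α} (hts : (t : Set α) ⊆ s) (ht : IsAntichain (· ≤ ·) (t : Set α))
    (hcard : n ≤ t.card) (i : Fin n) :
    ∃ x, IsGreatest (largeAntichainPoints s n ∩ C i) x := by
  obtain ⟨g, -, hg⟩ :=
    exists_injective_transversal_of_isAntichain hC ht (hts.trans hsC) (by simpa using hcard)
  have points_subset : largeAntichainPoints s n ⊆ s := fun _ ⟨_, hus, _, _, hxu⟩ => hus hxu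
  exact exists_isGreatest_of_finite_of_isChain (hs.subset (inter_subset_left.trans points_subset))
    ⟨g i, ⟨t, hts, ht, hcard, (hg i).1⟩, (hg i).2⟩ ((hC i).mono inter_subset_right)

theorem eq_of_isGreatest_largeAntichainPoints_le {C : Fin n → Set α}
    (hC : ∀ i, IsChain (· ≤ ·) (C i)) (hsC : s ⊆ ⋃ i, C i) {x : Fin n → α}
    (hx : ∀ i, IsGreatest (largeAntichainPoints s n ∩ C i) (x i))
    {i j : Fin n} (hij : x i ≤ x j) : i = j := by
  obtain ⟨⟨t, hts, ht, hcard, hxt⟩, hxC⟩ := (hx j).1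
  obtain ⟨g, g_injective, hg⟩ :=
    exists_injective_transversal_of_isAntichain hC ht (hts.trans hsC) (by simpa using hcard)
  have g_le : g i ≤ x i := (hx i).2 ⟨⟨t, hts, ht, hcard, (hg i).1⟩, (hg i).2⟩
  have g_i_eq : g i = x j := ht.eq (hg i).1 hxt (g_le.trans hij)
  have g_j_eq : g j = x j :=
    inter_subsingleton_of_isAntichain_of_isChain ht (hC j) (hg j) ⟨hxt, hxC⟩
  exact g_injective (g_i_eq.trans g_j_eq.symm)

theorem WidthLE.exists_le_of_maximal (hs : WidthLE s n) {a : α} (ha : Maximal (· ∈ s) a)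
    {x : Fin n → α} (hxs : ∀ i, x i ∈ s) (hx : ∀ i j, x i ≤ x j → i = j) : ∃ i, x i ≤ a := by
  classical
  by_contra! not_le
  have x_injective : Function.Injective x := fun i j hij => hx i j hij.le
  have a_notMem : a ∉ Finset.univ.image x := by
    simpa using fun i (hi : x i = a) => not_le i hi.le
  have range_antichain : IsAntichain (· ≤ ·) (range x) := by
    rintro _ ⟨i, rfl⟩ _ ⟨j, rfl⟩ hne hle
    exact hne (congrArg x (hx i j hle))
  have insert_antichain : IsAntichain (· ≤ ·) (insert a (range x)) := by
    refine range_antichain.insert ?_ ?_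
    · rintro _ ⟨i, rfl⟩ - hle
      exact not_le i hle
    · rintro _ ⟨i, rfl⟩ - hle
      exact not_le i (ha.le_of_ge (hxs i) hle)
  have insert_subset : insert a (range x) ⊆ s :=
    insert_subset_iff.mpr ⟨ha.prop, range_subset_iff.mpr hxs⟩
  have card_le := hs (insert a (Finset.univ.image x)) (by simpa using insert_subset)
    (by simpa using insert_antichain)
  rw [Finset.card_insert_of_notMem a_notMem, Finset.card_image_of_injective _ x_injective,
    Finset.card_fin] at card_le
  omega

theorem widthLE_diff_inter_Iic_of_isGreatest {m : ℕ} {C : Fin (m + 1) → Set α}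
    (hC : ∀ i, IsChain (· ≤ ·) (C i)) (hsC : s ⊆ ⋃ i, C i) {i : Fin (m + 1)} {b : α}
    (hb : IsGreatest (largeAntichainPoints s (m + 1) ∩ C i) b) :
    WidthLE (s \ (C i ∩ Iic b)) m := by
  intro t hts ht
  by_contra! hcard
  have hts' : (t : Set α) ⊆ s := hts.trans sdiff_subset
  obtain ⟨g, -, hg⟩ :=
    exists_injective_transversal_of_isAntichain hC ht (hts'.trans hsC) (by simpa using hcard)
  have g_le : g i ≤ b := hb.2 ⟨⟨t, hts', ht, hcard, (hg i).1⟩, (hg i).2⟩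
  exact (hts (hg i).1).2 ⟨(hg i).2, g_le⟩

theorem WidthLE.exists_isChain_widthLE_diff {m : ℕ} (hfin : s.Finite) (hs : WidthLE s (m + 1))
    {a : α} (ha : Maximal (· ∈ s) a) (hcover : CoveredByChains (s \ {a}) (m + 1)) :
    ∃ K, IsChain (· ≤ ·) K ∧ a ∈ K ∧ WidthLE (s \ K) m := by
  by_cases hwidth : WidthLE (s \ {a}) m
  · exact ⟨{a}, IsChain.singleton, rfl, hwidth⟩
  obtain ⟨t, hts, ht, hcard⟩ : ∃ t : Finset α, (t : Set α) ⊆ s \ {a} ∧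
      IsAntichain (· ≤ ·) (t : Set α) ∧ m + 1 ≤ t.card := by
    simpa only [WidthLE, not_forall, not_le, exists_prop, Nat.succ_le_iff] using hwidth
  obtain ⟨C, hC, hsC⟩ := hcover
  choose x hx using
    exists_isGreatest_largeAntichainPoints_inter (hfin.subset sdiff_subset) hC hsC hts ht hcard
  have x_mem (i) : x i ∈ s :=
    let ⟨_, hus, _, _, hxu⟩ := (hx i).1.1
    (hus hxu).1
  obtain ⟨i, hia⟩ := hs.exists_le_of_maximal ha x_mem fun _ _ =>
    eq_of_isGreatest_largeAntichainPoints_le hC hsC hx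
  refine ⟨insert a (C i ∩ Iic (x i)), ?_, mem_insert _ _, ?_⟩
  · exact ((hC i).mono inter_subset_left).insert fun z hz _ => Or.inr (hz.2.trans hia)
  · rw [insert_eq, ← sdiff_sdiff]
    exact widthLE_diff_inter_Iic_of_isGreatest hC hsC (hx i)

theorem WidthLE.coveredByChains_of_finite (hfin : s.Finite) (hs : WidthLE s n) :
    CoveredByChains s n := by
  induction hcard : s.ncard using Nat.strong_induction_on generalizing s n with
  | _ N ih =>
    subst hcard
    rcases s.eq_empty_or_nonempty with rfl | hne
    · exact ⟨fun _ => ∅, fun _ => IsChain.empty, empty_subset _⟩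
    obtain ⟨a, ha⟩ := hfin.exists_maximal hne
    have n_pos : 1 ≤ n := by simpa using hs {a} (by simpa using ha.prop) (by simp)
    obtain ⟨m, rfl⟩ := Nat.exists_eq_add_of_le' n_pos
    have covered_diff {K : Set α} {k : ℕ} (haK : a ∈ K) (hK : WidthLE (s \ K) k) :
        CoveredByChains (s \ K) k :=
      ih _ (ncard_lt_ncard (sdiff_ssubset_left_iff.mpr ⟨a, ha.prop, haK⟩) hfin)
        (hfin.subset sdiff_subset) hK rfl
    obtain ⟨K, hK, haK, hwidth⟩ :=
      hs.exists_isChain_widthLE_diff hfin ha (covered_diff rfl (hs.mono sdiff_subset))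
    exact .succ_of_diff hK (covered_diff haK hwidth)

theorem coveredByChains_of_forall_finset
    (h : ∀ t : Finset α, (t : Set α) ⊆ s → CoveredByChains (t : Set α) n) :
    CoveredByChains s n := by
  classical
  have cover (t : Finset s) : CoveredByChains (Subtype.val '' (t : Set s)) n := by
    simpa using h (t.map (.subtype _)) (by simp)
  choose C hC htC using cover
  choose color hcolor using fun (t : Finset s) (x : t) =>
    mem_iUnion.mp (htC t (mem_image_of_mem _ x.2))
  obtain ⟨χ, hχ⟩ := Finset.rado_selection_subtype (β := fun _ => Fin n) color
  refine ⟨fun i => Subtype.val '' (χ ⁻¹' {i}), fun i => ?_, fun x hx => ?_⟩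
  · rintro _ ⟨x, hx, rfl⟩ _ ⟨y, hy, rfl⟩ hne
    obtain ⟨t, hpair, hχt⟩ := hχ {x, y}
    have mem_chain (z : ({x, y} : Finset s)) (hz : χ z = i) : (z : α) ∈ C t i :=
      hz ▸ hχt z ▸ hcolor t (inclusion hpair z)
    exact hC t i (mem_chain ⟨x, by simp⟩ hx) (mem_chain ⟨y, by simp⟩ hy) hne
  · exact mem_iUnion.mpr ⟨χ ⟨x, hx⟩, ⟨x, hx⟩, rfl, rfl⟩

theorem WidthLE.coveredByChains (hs : WidthLE s n) : CoveredByChains s n :=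
  coveredByChains_of_forall_finset fun t hts =>
    (hs.mono hts).coveredByChains_of_finite t.finite_toSet

theorem CoveredByChains.exists_partition (hs : CoveredByChains s n) :
    ∃ k ≤ n, ∃ D : Fin k → Set α, (∀ i, (D i).Nonempty) ∧
      (univ : Set (Fin k)).PairwiseDisjoint D ∧ (⋃ i, D i) = s ∧
      ∀ i, IsChain (· ≤ ·) (D i) := by
  obtain ⟨C, hC, hsC⟩ := hs
  choose color hcolor using fun x : s => mem_iUnion.mp (hsC x.2)
  let e := Finite.equivFin (range color)
  let D (j : Fin (Nat.card (range color))) : Set α := Subtype.val '' (color ⁻¹' {↑(e.symm j)})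
  have D_subset (j) : D j ⊆ C (e.symm j) := by
    rintro _ ⟨x, hx, rfl⟩
    exact hx ▸ hcolor x
  refine ⟨_, ?_, D, fun j => ?_, fun i _ j _ hij => ?_, ?_, fun j => (hC _).mono (D_subset j)⟩
  · simpa only [Nat.card_fin] using Finite.card_subtype_le (· ∈ range color)
  · obtain ⟨x, hx⟩ := (e.symm j).2
    exact ⟨x, x, hx, rfl⟩
  · refine (disjoint_image_iff Subtype.val_injective).mpr (Disjoint.preimage _ ?_)
    exact disjoint_singleton.mpr fun heq => hij (e.symm.injective (Subtype.ext heq))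
  · refine subset_antisymm (iUnion_subset fun j => Subtype.coe_image_subset s _) fun x hx => ?_
    let c : range color := ⟨color ⟨x, hx⟩, mem_range_self _⟩
    exact mem_iUnion.mpr ⟨e c, ⟨x, hx⟩, congrArg Subtype.val (e.symm_apply_apply c).symm, rfl⟩

theorem CoveredByChains.exists_infinite_isChain (hs : CoveredByChains s n) (hinf : s.Infinite) :
    ∃ T ⊆ s, T.Infinite ∧ IsChain (· ≤ ·) T := by
  obtain ⟨C, hC, hsC⟩ := hs
  obtain ⟨i, hi⟩ : ∃ i, (s ∩ C i).Infinite := by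
    by_contra! hfinite
    refine hinf ((finite_iUnion hfinite).subset ?_)
    rw [← inter_iUnion]
    exact subset_inter subset_rfl hsC
  exact ⟨s ∩ C i, inter_subset_left, hi, (hC i).mono inter_subset_right⟩

end Dilworth

section Halfspaces

variable {X : Type u} [MetricSpace X] {σ σ₁ σ₂ : Set (Set X)} {h k : Set X}

theorem UltrafilterOn.compl_mem_of_notMem (hσ : UltrafilterOn X σ) (hh : IsHalfspace h)
    (hhσ : h ∉ σ) : hᶜ ∈ σ :=
  (hσ.2.2 h hh).elim (fun hmem => absurd hmem.1 hhσ) And.left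

theorem UltrafilterOn.injOn_wall (hσ : UltrafilterOn X σ) :
    InjOn (fun h : Set X => ({h, hᶜ} : Set (Set X))) σ := by
  intro h hh k hk hwall
  rcases pair_eq_pair_iff.mp hwall with ⟨heq, -⟩ | ⟨heq, -⟩
  · exact heq
  · have inter_nonempty : (h ∩ k).Nonempty := hσ.2.1 h hh k hk
    simp [heq] at inter_nonempty

theorem UltrafilterOn.transv_of_mem_diff (hσ₁ : UltrafilterOn X σ₁) (hσ₂ : UltrafilterOn X σ₂)
    (hh : h ∈ σ₁ \ σ₂) (hk : k ∈ σ₁ \ σ₂) (hhk : ¬h ⊆ k) (hkh : ¬k ⊆ h) : Transv h k := by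
  have compl_mem {g : Set X} (hg : g ∈ σ₁ \ σ₂) : gᶜ ∈ σ₂ :=
    hσ₂.compl_mem_of_notMem (hσ₁.1 g hg.1) hg.2
  refine ⟨hσ₁.2.1 h hh.1 k hk.1, sdiff_nonempty.mpr hhk, ?_,
    hσ₂.2.1 _ (compl_mem hh) _ (compl_mem hk)⟩
  rw [inter_comm]
  exact sdiff_nonempty.mpr hkh

theorem RankLE.widthLE_diff {r : ℕ} (hr : RankLE X r) (hσ₁ : UltrafilterOn X σ₁)
    (hσ₂ : UltrafilterOn X σ₂) : WidthLE (σ₁ \ σ₂) r := by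
  classical
  intro t htσ ht
  rw [← Finset.card_image_of_injOn (hσ₁.injOn_wall.mono fun h hh => (htσ hh).1)]
  refine hr _ (fun w hw => ?_) fun w hw w' hw' hne => ?_
  · obtain ⟨h, hh, rfl⟩ := Finset.mem_image.mp hw
    exact ⟨h, hσ₁.1 h (htσ hh).1, rfl⟩
  · obtain ⟨h, hh, rfl⟩ := Finset.mem_image.mp hw
    obtain ⟨k, hk, rfl⟩ := Finset.mem_image.mp hw'
    have h_ne_k : h ≠ k := fun heq => hne (heq ▸ rfl)
    exact ⟨h, mem_insert _ _, k, mem_insert _ _, hσ₁.transv_of_mem_diff hσ₂ (htσ hh) (htσ hk)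
      (ht hh hk h_ne_k) (ht hk hh h_ne_k.symm)⟩

end Halfspaces

theorem ultrafilter_difference_decomposes_into_chains_general
    {X : Type u} [MetricSpace X] (r : ℕ) (hr : RankLE X r)
    (σ₁ σ₂ : Set (Set X)) (hσ₁ : UltrafilterOn X σ₁) (hσ₂ : UltrafilterOn X σ₂) :
    (∃ (k : ℕ), k ≤ r ∧ ∃ C : Fin k → Set (Set X),
      (∀ i, (C i).Nonempty) ∧
      (Set.univ : Set (Fin k)).PairwiseDisjoint C ∧
      (⋃ i, C i) = σ₁ \ σ₂ ∧
      ∀ i, IsChain (· ⊆ ·) (C i)) ∧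
    ∀ S : Set (Set X), S ⊆ σ₁ \ σ₂ → S.Infinite →
      ∃ T : Set (Set X), T ⊆ S ∧ T.Infinite ∧ IsChain (· ⊆ ·) T := by
  have covered : CoveredByChains (σ₁ \ σ₂) r := (hr.widthLE_diff hσ₁ hσ₂).coveredByChains
  exact ⟨covered.exists_partition, fun S hS => (covered.mono hS).exists_infinite_isChain⟩

/-- Let `X` be a median space of rank at most `r` and `σ₁, σ₂`
ultrafilters on the halfspaces of `X`.  (1) If `σ₁ \ σ₂` is nonempty, it
decomposes as a disjoint union of `k ≤ r` nonempty subsets, each totally ordered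
by inclusion.  (2) Every infinite subset of `σ₁ \ σ₂` contains an infinite subset
totally ordered by inclusion. -/
theorem ultrafilter_difference_decomposes_into_chains
    {X : Type u} [MetricSpace X] (hX : IsMedianSpace X)
    (r : ℕ) (hr : RankLE X r)
    (σ₁ σ₂ : Set (Set X)) (hσ₁ : UltrafilterOn X σ₁) (hσ₂ : UltrafilterOn X σ₂) :
    ((σ₁ \ σ₂).Nonempty →
      ∃ (k : ℕ), k ≤ r ∧ ∃ C : Fin k → Set (Set X),
        (∀ i, (C i).Nonempty) ∧
        (Set.univ : Set (Fin k)).PairwiseDisjoint C ∧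
        (⋃ i, C i) = σ₁ \ σ₂ ∧
        ∀ i, IsChain (· ⊆ ·) (C i)) ∧
    ∀ S : Set (Set X), S ⊆ σ₁ \ σ₂ → S.Infinite →
      ∃ T : Set (Set X), T ⊆ S ∧ T.Infinite ∧ IsChain (· ⊆ ·) T := by
  have ⟨decomposition, infinite_chain⟩ :=
    ultrafilter_difference_decomposes_into_chains_general r hr σ₁ σ₂ hσ₁ hσ₂
  exact ⟨fun _ => decomposition, infinite_chain⟩
end

section
/- Let X be a complete, finite-rank median space, x ∈ X, σ an ultrafilter on 𝓗(X), and Ω ⊆ σ \ σ_x a minimal UBS. Then the set Ω' of halfspaces k ∈ Ω that are not transverse to any diverging chain of halfspaces contained in Ω is a reduced UBS equivalent to Ω. -/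
open Metric Filter Set

universe u

/-- A diverging chain of halfspaces (with respect to the basepoint `x`):
a nested sequence of halfspaces whose distance from `x` tends to infinity. -/
def DivChain {X : Type u} [MetricSpace X] (x : X) (c : ℕ → Set X) : Prop :=
  (∀ n, IsHalfspace (c n)) ∧ (∀ n, c (n + 1) ⊆ c n) ∧
    Tendsto (fun n => infDist x (c n)) atTop atTop

/-- A set of halfspaces is inseparable if it contains every halfspace squeezed
between two of its members. -/
def Insep {X : Type u} [MetricSpace X] (Ω : Set (Set X)) : Prop :=
  ∀ j : Set X, IsHalfspace j → ∀ h ∈ Ω, ∀ k ∈ Ω, h ⊆ j → j ⊆ k → j ∈ Ω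

/-- A unidirectional boundary set (UBS) for the ultrafilter `σ`, with basepoint
`x`: an inseparable subset of `σ \ σ_x` containing a diverging chain. -/
def IsUBS {X : Type u} [MetricSpace X] (x : X) (σ Ω : Set (Set X)) : Prop :=
  Ω ⊆ σ \ sigmaPt x ∧ Insep Ω ∧ ∃ c : ℕ → Set X, DivChain x c ∧ ∀ n, c n ∈ Ω

/-- `Ω₁ ≼ Ω₂`: the halfspaces of `Ω₁ \ Ω₂` lie at uniformly bounded distance
from `x` (almost containment of UBS's). -/
def AlmostLE {X : Type u} [MetricSpace X] (x : X) (Ω₁ Ω₂ : Set (Set X)) : Prop :=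
  ∃ M : ℝ, ∀ h ∈ Ω₁ \ Ω₂, infDist x h ≤ M

/-- Equivalence of UBS's. -/
def UBSEquiv {X : Type u} [MetricSpace X] (x : X) (Ω₁ Ω₂ : Set (Set X)) : Prop :=
  AlmostLE x Ω₁ Ω₂ ∧ AlmostLE x Ω₂ Ω₁

/-- A UBS is minimal if every UBS almost contained in it almost contains it. -/
def MinimalUBS {X : Type u} [MetricSpace X] (x : X) (σ Ω : Set (Set X)) : Prop :=
  IsUBS x σ Ω ∧ ∀ Ω₀ : Set (Set X), IsUBS x σ Ω₀ → AlmostLE x Ω₀ Ω → AlmostLE x Ω Ω₀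

/-- A set of halfspaces is reduced if none of its members is transverse to a
diverging chain of halfspaces contained in it. -/
def ReducedUBS {X : Type u} [MetricSpace X] (x : X) (Ω : Set (Set X)) : Prop :=
  ∀ k ∈ Ω, ¬ ∃ c : ℕ → Set X, DivChain x c ∧ (∀ n, c n ∈ Ω) ∧ ∀ n, Transv k (c n)

/-- A set of halfspaces is strongly reduced if it is a finite disjoint union of
subsets, each totally ordered by inclusion and containing a diverging chain. -/
def StronglyReducedUBS {X : Type u} [MetricSpace X] (x : X) (Ω : Set (Set X)) : Prop :=
  ∃ (k : ℕ) (C : Fin k → Set (Set X)), 1 ≤ k ∧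
    (Set.univ : Set (Fin k)).PairwiseDisjoint C ∧
    (⋃ i, C i) = Ω ∧
    ∀ i, IsChain (· ⊆ ·) (C i) ∧ ∃ c : ℕ → Set X, DivChain x c ∧ ∀ n, c n ∈ C i

/-!
Every diverging chain `c` in a minimal UBS `Ω` generates `Ω` up to bounded distance: the inseparable
hull of `c` is a UBS contained in `Ω`, so minimality makes it almost contain `Ω`. Hence any two
diverging chains `c`, `d` in `Ω` are cofinal in each other. If `k` belongs to the hull of `c`, then
`k` contains some `c m`, hence some `d p`, and so `k` is not transverse to `d`. The reduction of `Ω`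
therefore contains the hull of `c`, and with it almost all of `Ω`.

For inseparability, let `h ⊆ j` with `j` transverse to a diverging chain `c` in `Ω`. No `c n` is
contained in `h`, and `h` is not contained in `c n` once `c n` is further than `h` from the
basepoint. Since members of `σ \ σ_x` intersect pairwise and miss `x`, a tail of `c` is transverse
to `h`.
-/

section Reduction

variable {X : Type u} [MetricSpace X] {x : X} {σ Ω Ω₁ Ω₂ A : Set (Set X)} {h j k : Set X}
  {c d : ℕ → Set X}

theorem Transv.not_subset (hhk : Transv h k) : ¬ k ⊆ h :=
  let ⟨_, hyh, hyk⟩ := hhk.2.2.1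
  fun hkh => hyh (hkh hyk)

theorem transv_of_not_subset (hhk : (h ∩ k).Nonempty) (hxh : x ∉ h) (hxk : x ∉ k)
    (h_not_sub : ¬ h ⊆ k) (k_not_sub : ¬ k ⊆ h) : Transv h k :=
  ⟨hhk, inter_compl_nonempty_iff.2 h_not_sub,
    inter_comm k hᶜ ▸ inter_compl_nonempty_iff.2 k_not_sub, x, hxh, hxk⟩

theorem DivChain.antitone (hc : DivChain x c) : Antitone c :=
  antitone_nat_of_succ_le hc.2.1

theorem DivChain.exists_forall_of_eventually (hc : DivChain x c) {p : Set X → Prop}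
    (hp : ∀ᶠ n in atTop, p (c n)) : ∃ d, DivChain x d ∧ ∀ n, p (d n) := by
  obtain ⟨N, hN⟩ := eventually_atTop.1 hp
  exact ⟨fun n => c (n + N),
    ⟨fun n => hc.1 _, fun n => hc.antitone (by lia), hc.2.2.comp (tendsto_add_atTop_nat N)⟩,
    fun n => hN _ (Nat.le_add_left N n)⟩

theorem DivChain.eventually_not_subset (hc : DivChain x c) (hh : h.Nonempty) :
    ∀ᶠ n in atTop, ¬ h ⊆ c n := by
  filter_upwards [hc.2.2.eventually_gt_atTop (infDist x h)] with n hn hsub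
  exact (infDist_le_infDist_of_subset hsub hh).not_gt hn

theorem AlmostLE.of_subset (hsub : Ω₁ ⊆ Ω₂) : AlmostLE x Ω₁ Ω₂ :=
  ⟨0, fun _ hh => absurd (hsub hh.1) hh.2⟩

theorem AlmostLE.trans_subset (hΩ : AlmostLE x Ω Ω₁) (hsub : Ω₁ ⊆ Ω₂) : AlmostLE x Ω Ω₂ :=
  let ⟨M, hM⟩ := hΩ
  ⟨M, fun h hh => hM h ⟨hh.1, fun hh₁ => hh.2 (hsub hh₁)⟩⟩

theorem AlmostLE.eventually_mem (hΩ : AlmostLE x Ω₁ Ω₂) (hc : DivChain x c)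
    (hcΩ : ∀ n, c n ∈ Ω₁) : ∀ᶠ n in atTop, c n ∈ Ω₂ := by
  obtain ⟨M, hM⟩ := hΩ
  filter_upwards [hc.2.2.eventually_gt_atTop M] with n hn
  by_contra hcn
  exact (hM (c n) ⟨hcΩ n, hcn⟩).not_gt hn

/-- The inseparable hull of a set `A` of halfspaces: all halfspaces lying between two members
of `A`. The hull of a diverging chain is the UBS generated by that chain. -/
def insepHull (A : Set (Set X)) : Set (Set X) :=
  {j | IsHalfspace j ∧ ∃ h ∈ A, ∃ k ∈ A, h ⊆ j ∧ j ⊆ k}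

theorem insep_insepHull (A : Set (Set X)) : Insep (insepHull A) := by
  rintro j hj h ⟨-, a, ha, -, -, hah, -⟩ k ⟨-, -, -, b, hb, -, hkb⟩ hhj hjk
  exact ⟨hj, a, ha, b, hb, hah.trans hhj, hjk.trans hkb⟩

theorem Insep.insepHull_subset (hΩ : Insep Ω) (hA : A ⊆ Ω) : insepHull A ⊆ Ω := by
  rintro j ⟨hj, h, hh, k, hk, hhj, hjk⟩
  exact hΩ j hj h (hA hh) k (hA hk) hhj hjk

theorem IsUBS.insepHull_range (hΩ : IsUBS x σ Ω) (hc : DivChain x c) (hcΩ : ∀ n, c n ∈ Ω) :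
    IsUBS x σ (insepHull (range c)) :=
  ⟨(hΩ.2.1.insepHull_subset (range_subset_iff.2 hcΩ)).trans hΩ.1, insep_insepHull _, c, hc,
    fun n => ⟨hc.1 n, c n, mem_range_self n, c n, mem_range_self n, Subset.rfl, Subset.rfl⟩⟩

theorem MinimalUBS.almostLE_insepHull_range (hΩ : MinimalUBS x σ Ω) (hc : DivChain x c)
    (hcΩ : ∀ n, c n ∈ Ω) : AlmostLE x Ω (insepHull (range c)) :=
  hΩ.2 _ (hΩ.1.insepHull_range hc hcΩ)
    (.of_subset (hΩ.1.2.1.insepHull_subset (range_subset_iff.2 hcΩ)))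

theorem MinimalUBS.exists_subset_of_divChain (hΩ : MinimalUBS x σ Ω)
    (hc : DivChain x c) (hcΩ : ∀ n, c n ∈ Ω) (hd : DivChain x d) (hdΩ : ∀ n, d n ∈ Ω) (m : ℕ) :
    ∃ p, d p ⊆ c m := by
  have c_mem_hull : ∀ᶠ n in atTop, c n ∈ insepHull (range d) :=
    (hΩ.almostLE_insepHull_range hd hdΩ).eventually_mem hc hcΩ
  obtain ⟨n, ⟨-, _, ⟨p, rfl⟩, -, -, hdc, -⟩, hmn⟩ :=
    (c_mem_hull.and (eventually_ge_atTop m)).exists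
  exact ⟨p, hdc.trans (hc.antitone hmn)⟩

/-- The halfspace `k` is transverse to some diverging chain (with respect to the basepoint `x`)
of halfspaces contained in `Ω`. -/
def TransvToDivChain (x : X) (Ω : Set (Set X)) (k : Set X) : Prop :=
  ∃ c : ℕ → Set X, DivChain x c ∧ (∀ n, c n ∈ Ω) ∧ ∀ n, Transv k (c n)

theorem TransvToDivChain.mono (hsub : Ω₁ ⊆ Ω₂) (hk : TransvToDivChain x Ω₁ k) :
    TransvToDivChain x Ω₂ k :=
  let ⟨c, hc, hcΩ, hkc⟩ := hk
  ⟨c, hc, fun n => hsub (hcΩ n), hkc⟩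

theorem TransvToDivChain.of_subset (hΩx : ∀ k ∈ Ω, x ∉ k)
    (hΩ : ∀ h ∈ Ω, ∀ k ∈ Ω, (h ∩ k).Nonempty) (hh : h ∈ Ω) (hhj : h ⊆ j)
    (hj : TransvToDivChain x Ω j) : TransvToDivChain x Ω h := by
  obtain ⟨c, hc, hcΩ, hjc⟩ := hj
  have c_transv : ∀ᶠ n in atTop, c n ∈ Ω ∧ Transv h (c n) := by
    filter_upwards [hc.eventually_not_subset (hΩ h hh h hh).left] with n hn
    exact ⟨hcΩ n, transv_of_not_subset (hΩ h hh _ (hcΩ n)) (hΩx h hh) (hΩx _ (hcΩ n)) hn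
      fun hch => (hjc n).not_subset (hch.trans hhj)⟩
  obtain ⟨d, hd, hdp⟩ :=
    hc.exists_forall_of_eventually (p := fun k => k ∈ Ω ∧ Transv h k) c_transv
  exact ⟨d, hd, fun n => (hdp n).1, fun n => (hdp n).2⟩

/-- The reduction `Ω'` of a set `Ω` of halfspaces: the members of `Ω` that are not transverse to
any diverging chain contained in `Ω`. -/
def ubsReduction (x : X) (Ω : Set (Set X)) : Set (Set X) :=
  {k ∈ Ω | ¬ TransvToDivChain x Ω k}

theorem ubsReduction_subset (x : X) (Ω : Set (Set X)) : ubsReduction x Ω ⊆ Ω :=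
  sep_subset _ _

theorem reducedUBS_ubsReduction (x : X) (Ω : Set (Set X)) : ReducedUBS x (ubsReduction x Ω) :=
  fun _ hk hk_transv => hk.2 (TransvToDivChain.mono (ubsReduction_subset x Ω) hk_transv)

theorem Insep.insep_ubsReduction (hins : Insep Ω) (hΩx : ∀ k ∈ Ω, x ∉ k)
    (hΩ : ∀ h ∈ Ω, ∀ k ∈ Ω, (h ∩ k).Nonempty) : Insep (ubsReduction x Ω) :=
  fun j hj h hh k hk hhj hjk => ⟨hins j hj h hh.1 k hk.1 hhj hjk,
    fun hjΩ => hh.2 (hjΩ.of_subset hΩx hΩ hh.1 hhj)⟩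

theorem MinimalUBS.insepHull_range_subset_ubsReduction (hΩ : MinimalUBS x σ Ω)
    (hc : DivChain x c) (hcΩ : ∀ n, c n ∈ Ω) : insepHull (range c) ⊆ ubsReduction x Ω := by
  intro k hk
  refine ⟨hΩ.1.2.1.insepHull_subset (range_subset_iff.2 hcΩ) hk, ?_⟩
  rintro ⟨d, hd, hdΩ, hkd⟩
  obtain ⟨-, _, ⟨m, rfl⟩, -, -, hck, -⟩ := hk
  obtain ⟨p, hdc⟩ := hΩ.exists_subset_of_divChain hc hcΩ hd hdΩ m
  exact (hkd p).not_subset (hdc.trans hck)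

theorem MinimalUBS.almostLE_ubsReduction (hΩ : MinimalUBS x σ Ω) :
    AlmostLE x Ω (ubsReduction x Ω) :=
  let ⟨_, hc, hcΩ⟩ := hΩ.1.2.2
  (hΩ.almostLE_insepHull_range hc hcΩ).trans_subset
    (hΩ.insepHull_range_subset_ubsReduction hc hcΩ)

theorem MinimalUBS.isUBS_ubsReduction (hσ : UltrafilterOn X σ) (hΩ : MinimalUBS x σ Ω) :
    IsUBS x σ (ubsReduction x Ω) := by
  obtain ⟨hΩσ, hins, c, hc, hcΩ⟩ := hΩ.1
  have notMem : ∀ k ∈ Ω, x ∉ k := fun k hk hxk => (hΩσ hk).2 ⟨hσ.1 k (hΩσ hk).1, hxk⟩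
  have inter_nonempty : ∀ h ∈ Ω, ∀ k ∈ Ω, (h ∩ k).Nonempty := fun h hh k hk =>
    hσ.2.1 h (hΩσ hh).1 k (hΩσ hk).1
  exact ⟨(ubsReduction_subset x Ω).trans hΩσ, hins.insep_ubsReduction notMem inter_nonempty,
    hc.exists_forall_of_eventually (hΩ.almostLE_ubsReduction.eventually_mem hc hcΩ)⟩

theorem reduction_of_minimal_UBS_general (hσ : UltrafilterOn X σ) (hΩ : MinimalUBS x σ Ω) :
    IsUBS x σ (ubsReduction x Ω) ∧ ReducedUBS x (ubsReduction x Ω) ∧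
      UBSEquiv x (ubsReduction x Ω) Ω :=
  ⟨hΩ.isUBS_ubsReduction hσ, reducedUBS_ubsReduction x Ω,
    .of_subset (ubsReduction_subset x Ω), hΩ.almostLE_ubsReduction⟩

end Reduction

/-- Let `X` be a complete, finite-rank median space, `x ∈ X`,
`σ` an ultrafilter on the halfspaces, and `Ω ⊆ σ \ σ_x` a minimal UBS.  Then the
set `Ω'` of halfspaces of `Ω` not transverse to any diverging chain contained in
`Ω` is a reduced UBS equivalent to `Ω`. -/
theorem reduction_of_minimal_UBS
    {X : Type u} [MetricSpace X] [CompleteSpace X]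
    (hX : IsMedianSpace X) (hfr : HasFiniteRank X)
    (x : X) (σ : Set (Set X)) (hσ : UltrafilterOn X σ)
    (Ω : Set (Set X)) (hΩ : MinimalUBS x σ Ω) :
    IsUBS x σ
      {k ∈ Ω | ¬ ∃ c : ℕ → Set X, DivChain x c ∧ (∀ n, c n ∈ Ω) ∧ ∀ n, Transv k (c n)} ∧
    ReducedUBS x
      {k ∈ Ω | ¬ ∃ c : ℕ → Set X, DivChain x c ∧ (∀ n, c n ∈ Ω) ∧ ∀ n, Transv k (c n)} ∧
    UBSEquiv x
      {k ∈ Ω | ¬ ∃ c : ℕ → Set X, DivChain x c ∧ (∀ n, c n ∈ Ω) ∧ ∀ n, Transv k (c n)}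
      Ω := by
  exact reduction_of_minimal_UBS_general hσ hΩ
end

section
/- Let X be a median space, x ∈ X, σ an ultrafilter on 𝓗(X), and Ξ ⊆ σ \ σ_x a subset with the property that whenever h ∈ σ, k ∈ Ξ and h ⊆ k, then h ∈ Ξ. Then the set (σ \ Ξ) ∪ Ξ*, where Ξ* := {h* : h ∈ Ξ}, is an ultrafilter on 𝓗(X). -/
open Metric Filter Set

universe u

/-- The family `(σ \ Ξ) ∪ Ξ*` obtained from `σ` by replacing every member of `Ξ`
by its complement. -/
def complFlip {α : Type*} [Compl α] (σ Ξ : Set α) : Set α :=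
  σ \ Ξ ∪ compl '' Ξ

section BooleanAlgebra

variable {α : Type*} [BooleanAlgebra α] {σ Ξ : Set α} {a : α}

theorem mem_complFlip : a ∈ complFlip σ Ξ ↔ a ∈ σ ∧ a ∉ Ξ ∨ aᶜ ∈ Ξ := by
  simp only [complFlip, mem_union, Set.mem_sdiff, mem_compl_image]

theorem mem_complFlip_iff_notMem (hΞ : Ξ ⊆ σ) (ha : a ∈ σ) (ha' : aᶜ ∉ σ) :
    a ∈ complFlip σ Ξ ↔ a ∉ Ξ := by
  simp only [mem_complFlip, ha, true_and, notMem_subset hΞ ha', or_false]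

theorem compl_mem_complFlip_iff_mem (ha' : aᶜ ∉ σ) : aᶜ ∈ complFlip σ Ξ ↔ a ∈ Ξ := by
  simp only [mem_complFlip, ha', false_and, compl_compl, false_or]

theorem xor_mem_compl_mem_complFlip_of_mem (hΞ : Ξ ⊆ σ) (ha : a ∈ σ) (ha' : aᶜ ∉ σ) :
    Xor (a ∈ complFlip σ Ξ) (aᶜ ∈ complFlip σ Ξ) := by
  rw [mem_complFlip_iff_notMem hΞ ha ha', compl_mem_complFlip_iff_mem ha']
  exact xor_not_left.mpr Iff.rfl

theorem xor_mem_compl_mem_complFlip (hΞ : Ξ ⊆ σ) (ha : Xor (a ∈ σ) (aᶜ ∈ σ)) :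
    Xor (a ∈ complFlip σ Ξ) (aᶜ ∈ complFlip σ Ξ) := by
  rcases ha with ⟨ha, ha'⟩ | ⟨ha', ha⟩
  · exact xor_mem_compl_mem_complFlip_of_mem hΞ ha ha'
  · have xor_swapped := xor_mem_compl_mem_complFlip_of_mem hΞ ha' (by rwa [compl_compl])
    rwa [compl_compl, xor_comm] at xor_swapped

end BooleanAlgebra

theorem inter_nonempty_of_mem_complFlip {α : Type*} {σ Ξ : Set (Set α)}
    (hσ : ∀ h ∈ σ, ∀ k ∈ σ, (h ∩ k).Nonempty)
    (hΞ : ∀ h ∈ Ξ, ∀ k ∈ Ξ, (hᶜ ∩ kᶜ).Nonempty)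
    (hdown : ∀ h ∈ σ, ∀ k ∈ Ξ, h ⊆ k → h ∈ Ξ) :
    ∀ h ∈ complFlip σ Ξ, ∀ k ∈ complFlip σ Ξ, (h ∩ k).Nonempty := by
  have kept_inter_flipped {h k : Set α} (hh : h ∈ σ \ Ξ) (hk : k ∈ Ξ) : (h ∩ kᶜ).Nonempty :=
    inter_compl_nonempty_iff.mpr fun hhk => hh.2 (hdown h hh.1 k hk hhk)
  rintro h (hh | ⟨h, hh, rfl⟩) k (hk | ⟨k, hk, rfl⟩)
  · exact hσ h hh.1 k hk.1
  · exact kept_inter_flipped hh hk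
  · exact inter_comm k hᶜ ▸ kept_inter_flipped hk hh
  · exact hΞ h hh k hk

theorem IsHalfspace.compl {X : Type u} [MetricSpace X] {h : Set X} (hh : IsHalfspace h) :
    IsHalfspace hᶜ :=
  ⟨hh.2, (compl_compl h).symm ▸ hh.1⟩

theorem UltrafilterOn.notMem_of_mem_sdiff_sigmaPt {X : Type u} [MetricSpace X]
    {σ : Set (Set X)} (hσ : UltrafilterOn X σ) {x : X} {h : Set X} (hh : h ∈ σ \ sigmaPt x) :
    x ∉ h :=
  fun hx => hh.2 ⟨hσ.1 h hh.1, hx⟩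

theorem flipping_a_downward_closed_subset_of_an_ultrafilter_general
    {X : Type u} [MetricSpace X] {σ Ξ : Set (Set X)} (hσ : UltrafilterOn X σ) (hΞσ : Ξ ⊆ σ)
    (hΞ : ∀ h ∈ Ξ, ∀ k ∈ Ξ, (hᶜ ∩ kᶜ).Nonempty)
    (hdown : ∀ h ∈ σ, ∀ k ∈ Ξ, h ⊆ k → h ∈ Ξ) :
    UltrafilterOn X (complFlip σ Ξ) := by
  obtain ⟨halfspace_of_mem, inter_nonempty, xor_mem⟩ := hσ
  refine ⟨?_, inter_nonempty_of_mem_complFlip inter_nonempty hΞ hdown,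
    fun h hh => xor_mem_compl_mem_complFlip hΞσ (xor_mem h hh)⟩
  rintro h (hh | ⟨k, hk, rfl⟩)
  · exact halfspace_of_mem h hh.1
  · exact (halfspace_of_mem k (hΞσ hk)).compl

/-- Let `X` be a median space, `x ∈ X`, `σ` an ultrafilter on
the halfspaces and `Ξ ⊆ σ \ σ_x` such that every `h ∈ σ` contained in some
member of `Ξ` belongs to `Ξ`.  Then `(σ \ Ξ) ∪ Ξ*` is an ultrafilter. -/
theorem flipping_a_downward_closed_subset_of_an_ultrafilter
    {X : Type u} [MetricSpace X] (hX : IsMedianSpace X)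
    (x : X) (σ : Set (Set X)) (hσ : UltrafilterOn X σ)
    (Ξ : Set (Set X)) (hΞ : Ξ ⊆ σ \ sigmaPt x)
    (hdown : ∀ h ∈ σ, ∀ k ∈ Ξ, h ⊆ k → h ∈ Ξ) :
    UltrafilterOn X ((σ \ Ξ) ∪ (fun h : Set X => hᶜ) '' Ξ) := by
  have notMem_of_mem {h} (hh : h ∈ Ξ) : x ∉ h := hσ.notMem_of_mem_sdiff_sigmaPt (hΞ hh)
  exact flipping_a_downward_closed_subset_of_an_ultrafilter_general hσ (hΞ.trans sdiff_subset)
    (fun _ hh _ hk => ⟨x, notMem_of_mem hh, notMem_of_mem hk⟩) hdown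
end
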